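/- Let M : ℕ → ι → α be such that every change of M is single-entry. Let ℓ be a natural number, set r = ⌊ℓ/2⌋ + 1, and let u : Fin (r+1) → ℕ be monotone (u 0 ≤ u 1 ≤ ... ≤ u r). For each i : Fin r let cᵢ : ι → ℕ satisfy u i ≤ cᵢ k ≤ u (i+1) for all k (the r collects are taken in consecutive windows). Assume: (a) the set of change times t of M with u 0 ≤ t < u r has at most ℓ elements; and (b) all r collects return the same array v : ι → α, i.e., M (cᵢ k) k = v k for all i and k. Then v is a snapshot: there exists t with u 0 ≤ t ≤ u r such that v k = M t k for all k. -/

import Mathlib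

/-!
The windows `[u i, u (i + 1))` are disjoint and lie in `[u 0, u r)`. If each of the `⌊ℓ/2⌋ + 1`
of them contained two changes there would be more than `ℓ` changes in total, so some window
contains at most one, affecting a single entry `k₀`. All other entries are constant throughout
that window, hence its collect is the state of the array at the time when `k₀` was read.
-/

open Set Order

theorem eq_of_forall_succ_eq {α β : Type*} [LinearOrder α] [SuccOrder α] [IsSuccArchimedean α]
    {f : α → β} {a b s t : α} (h : ∀ x ∈ Ico a b, f (succ x) = f x)
    (hs : s ∈ Icc a b) (ht : t ∈ Icc a b) : f s = f t := by
  have hpath : Relation.ReflTransGen (fun x y ↦ f x = f y) s t :=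
    reflTransGen_of_succ _ (fun x hx ↦ (h x ⟨hs.1.trans hx.1, hx.2.trans_le ht.2⟩).symm)
      fun x hx ↦ h x ⟨ht.1.trans hx.1, hx.2.trans_le hs.2⟩
  exact hpath.trans_induction_on (fun _ ↦ rfl) id fun _ _ ↦ Eq.trans

theorem exists_encard_inter_Ico_le {β : Type*} [Preorder β] {n : ℕ} {u : Fin (n + 1) → β}
    (hu : Monotone u) {s : Set β} {m : ℕ∞}
    (hs : (s ∩ Ico (u 0) (u (Fin.last n))).encard < n * (m + 1)) :
    ∃ i : Fin n, (s ∩ Ico (u i.castSucc) (u i.succ)).encard ≤ m := by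
  by_contra! hlarge
  have hdisj : Pairwise fun i j : Fin n ↦
      Disjoint (s ∩ Ico (u i.castSucc) (u i.succ)) (s ∩ Ico (u j.castSucc) (u j.succ)) := by
    intro i j hij
    have hIco := hu.pairwise_disjoint_on_Ico_succ ((Fin.castSucc_injective n).ne hij)
    simp only [Function.onFun, Fin.orderSucc_castSucc] at hIco
    exact hIco.mono inter_subset_right inter_subset_right
  have hsub : ⋃ i : Fin n, s ∩ Ico (u i.castSucc) (u i.succ) ⊆ s ∩ Ico (u 0) (u (Fin.last n)) :=
    iUnion_subset fun i ↦ inter_subset_inter_right s <|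
      Ico_subset_Ico (hu (Fin.zero_le _)) (hu (Fin.le_last _))
  refine hs.not_ge ?_
  calc
    n * (m + 1) = ∑ _i : Fin n, (m + 1) := by rw [Fin.sum_const, nsmul_eq_mul]
    _ ≤ ∑ i : Fin n, (s ∩ Ico (u i.castSucc) (u i.succ)).encard :=
      Finset.sum_le_sum fun i _ ↦ add_one_le_of_lt (hlarge i)
    _ = (⋃ i : Fin n, s ∩ Ico (u i.castSucc) (u i.succ)).encard := by
      rw [encard_iUnion_of_finite hdisj, finsum_eq_sum_of_fintype]
    _ ≤ (s ∩ Ico (u 0) (u (Fin.last n))).encard := encard_le_encard hsub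

/-- The times at which the discrete-time process `f` changes: `t` stands for the step from `t` to
`t + 1`. -/
def changeTimes {β : Type*} (f : ℕ → β) : Set ℕ :=
  {t | f (t + 1) ≠ f t}

section Collect

variable {ι : Type*} {α : ι → Type*}

/-- The array returned by a collect that reads entry `k` of `M` at time `c k`. -/
def collect (M : ℕ → ∀ k, α k) (c : ι → ℕ) : ∀ k, α k :=
  fun k ↦ M (c k) k

variable {M : ℕ → ∀ k, α k} {a b : ℕ}

theorem collect_eq_of_forall_ne_succ_eq {c : ι → ℕ} {k₀ : ι}
    (h : ∀ t ∈ changeTimes M ∩ Ico a b, ∀ k ≠ k₀, M (t + 1) k = M t k)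
    (hc : ∀ k, c k ∈ Icc a b) : collect M c = M (c k₀) := by
  funext k
  obtain rfl | hk := eq_or_ne k k₀
  · rfl
  have hstep : ∀ t ∈ Ico a b, M (t + 1) k = M t k := by
    intro t ht
    by_cases hchange : t ∈ changeTimes M
    · exact h t ⟨hchange, ht⟩ k hk
    · exact congrFun (not_not.mp hchange) k
  exact eq_of_forall_succ_eq (f := fun t ↦ M t k) hstep (hc k) (hc k₀)

theorem exists_collect_eq_of_subsingleton (hab : a ≤ b)
    (hsingle : ∀ t ∈ changeTimes M ∩ Ico a b, ∃ k₀, ∀ k ≠ k₀, M (t + 1) k = M t k)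
    (hsub : (changeTimes M ∩ Ico a b).Subsingleton) {c : ι → ℕ} (hc : ∀ k, c k ∈ Icc a b) :
    ∃ t ∈ Icc a b, collect M c = M t := by
  cases isEmpty_or_nonempty ι
  · exact ⟨a, left_mem_Icc.mpr hab, Subsingleton.elim _ _⟩
  · obtain ⟨k₀, hk₀⟩ :
        ∃ k₀, ∀ t ∈ changeTimes M ∩ Ico a b, ∀ k ≠ k₀, M (t + 1) k = M t k := by
      obtain hnone | ⟨t₀, hone⟩ := hsub.eq_empty_or_singleton
      · exact ⟨Classical.arbitrary ι, by simp [hnone]⟩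
      · simpa only [hone, mem_singleton_iff, forall_eq] using hsingle
    exact ⟨c k₀, hc k₀, collect_eq_of_forall_ne_succ_eq hk₀ hc⟩

theorem equal_collects_are_snapshot_general {n : ℕ} {u : Fin (n + 1) → ℕ} (hu : Monotone u)
    (hsingle : ∀ t ∈ changeTimes M ∩ Ico (u 0) (u (Fin.last n)),
      ∃ k₀, ∀ k ≠ k₀, M (t + 1) k = M t k)
    (hchanges : (changeTimes M ∩ Ico (u 0) (u (Fin.last n))).ncard < n * 2)
    {c : Fin n → ι → ℕ} (hc : ∀ i k, c i k ∈ Icc (u i.castSucc) (u i.succ)) :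
    ∃ i, ∃ t ∈ Icc (u i.castSucc) (u i.succ), collect M (c i) = M t := by
  have hfin : (changeTimes M ∩ Ico (u 0) (u (Fin.last n))).Finite :=
    (finite_Ico _ _).inter_of_right _
  have hcard : (changeTimes M ∩ Ico (u 0) (u (Fin.last n))).encard < n * (1 + 1) := by
    rw [← hfin.cast_ncard_eq]
    exact_mod_cast hchanges
  obtain ⟨i, hi⟩ := exists_encard_inter_Ico_le hu hcard
  have hwindow : Ico (u i.castSucc) (u i.succ) ⊆ Ico (u 0) (u (Fin.last n)) :=
    Ico_subset_Ico (hu (Fin.zero_le _)) (hu (Fin.le_last _))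
  exact ⟨i, exists_collect_eq_of_subsingleton (hu i.castSucc_le_succ)
    (fun t ht ↦ hsingle t ⟨ht.1, hwindow ht.2⟩)
    (encard_le_one_iff_subsingleton.mp hi) (hc i)⟩

end Collect

/-- Core of the concurrent-updater Scan (lines B17–B20): if the array changes
at most `ℓ` times while `⌊ℓ/2⌋ + 1` consecutive collects all returning the same
array `v` are taken, then `v` is a snapshot. -/
theorem equal_collects_are_snapshot
    {ι α : Type*} (M : ℕ → ι → α)
    (hsingle : ∀ t, M (t + 1) ≠ M t → ∃ k₀ : ι, ∀ k, k ≠ k₀ → M (t + 1) k = M t k)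
    (ℓ : ℕ) (u : Fin (ℓ / 2 + 1 + 1) → ℕ) (hu : Monotone u)
    (c : Fin (ℓ / 2 + 1) → ι → ℕ)
    (hc : ∀ (i : Fin (ℓ / 2 + 1)) (k : ι),
      u i.castSucc ≤ c i k ∧ c i k ≤ u i.succ)
    (hchanges :
      Set.ncard {t : ℕ | M (t + 1) ≠ M t ∧ u 0 ≤ t ∧ t < u (Fin.last _)} ≤ ℓ)
    (v : ι → α)
    (hv : ∀ (i : Fin (ℓ / 2 + 1)) (k : ι), M (c i k) k = v k) :
    ∃ t, u 0 ≤ t ∧ t ≤ u (Fin.last _) ∧ ∀ k, v k = M t k := by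
  obtain ⟨i, t, ht, hsnapshot⟩ := equal_collects_are_snapshot_general hu
    (fun t ht ↦ hsingle t ht.1) (hchanges.trans_lt (by lia)) hc
  exact ⟨t, (hu (Fin.zero_le _)).trans ht.1, ht.2.trans (hu (Fin.le_last _)),
    fun k ↦ (hv i k).symm.trans (congrFun hsnapshot k)⟩
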